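/- For every γ = (a b; c d) ∈ SL₂(ℤ) and every τ ∈ ℍ one has F_{1−k,D}((aτ+b)/(cτ+d)) = (cτ+d)^{2−2k} · F_{1−k,D}(τ); that is, F_{1−k,D} is invariant under the weight 2−2k slash action of SL₂(ℤ). -/

import Mathlib

noncomputable section

open MeasureTheory

/-- The set of integral binary quadratic forms `[a,b,c]` of discriminant `D`. -/
def QD (D : ℤ) : Set (ℤ × ℤ × ℤ) := {q | q.2.1 ^ 2 - 4 * q.1 * q.2.2 = D}

/-- `Q(τ,1) = a τ² + b τ + c`. -/
def Qval (q : ℤ × ℤ × ℤ) (τ : ℂ) : ℂ :=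
  (q.1 : ℂ) * τ ^ 2 + (q.2.1 : ℂ) * τ + (q.2.2 : ℂ)

/-- `a|τ|² + b x + c` where `τ = x + iy`. -/
def Qell (q : ℤ × ℤ × ℤ) (τ : ℂ) : ℝ :=
  (q.1 : ℝ) * Complex.normSq τ + (q.2.1 : ℝ) * τ.re + (q.2.2 : ℝ)

/-- `ψ(v) = (1/2) ∫₀ᵛ u^(k-3/2) (1-u)^(-1/2) du`. -/
def psi (k : ℕ) (v : ℝ) : ℝ :=
  (1 / 2) * ∫ u in (0:ℝ)..v, u ^ ((k : ℝ) - 3 / 2) * (1 - u) ^ (-(1:ℝ) / 2)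

/-- real power of the integer `D`, as a complex number. -/
def Dpow (D : ℤ) (e : ℝ) : ℂ := (((D : ℝ) ^ e : ℝ) : ℂ)

/-- The summand of the series defining `F_{1-k,D}`. -/
def Fsummand (k : ℕ) (D : ℤ) (τ : ℂ) (q : ℤ × ℤ × ℤ) : ℂ :=
  ((Real.sign (Qell q τ) : ℝ) : ℂ) * Qval q τ ^ (k - 1) *
    ((psi k ((D : ℝ) * τ.im ^ 2 / Complex.normSq (Qval q τ)) : ℝ) : ℂ)

/-- `F_{1-k,D}`. -/
def F (k : ℕ) (D : ℤ) (τ : ℂ) : ℂ :=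
  (Dpow D (1 / 2 - (k : ℝ)) / (((Nat.choose (2 * k - 2) (k - 1) : ℝ) * Real.pi : ℝ) : ℂ)) *
    ∑' q : QD D, Fsummand k D τ (q : ℤ × ℤ × ℤ)

/-- `f_{k,D}`. -/
def fkD (k : ℕ) (D : ℤ) (τ : ℂ) : ℂ :=
  (Dpow D ((k : ℝ) - 1 / 2) / (((Nat.choose (2 * k - 2) (k - 1) : ℝ) * Real.pi : ℝ) : ℂ)) *
    ∑' q : QD D, Qval (q : ℤ × ℤ × ℤ) τ ^ (-(k : ℤ))

/-- Action of `SL₂(ℤ)` on binary quadratic forms: `(Q ∘ γ)(X,Y) = Q(pX+qY, rX+sY)`. -/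
def QAct (q : ℤ × ℤ × ℤ) (γ : Matrix.SpecialLinearGroup (Fin 2) ℤ) : ℤ × ℤ × ℤ :=
  (q.1 * (γ.1 0 0) ^ 2 + q.2.1 * (γ.1 0 0) * (γ.1 1 0) + q.2.2 * (γ.1 1 0) ^ 2,
   2 * q.1 * (γ.1 0 0) * (γ.1 0 1) + q.2.1 * ((γ.1 0 0) * (γ.1 1 1) + (γ.1 0 1) * (γ.1 1 0))
     + 2 * q.2.2 * (γ.1 1 0) * (γ.1 1 1),
   q.1 * (γ.1 0 1) ^ 2 + q.2.1 * (γ.1 0 1) * (γ.1 1 1) + q.2.2 * (γ.1 1 1) ^ 2)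

/-- A narrow class: an orbit of the `SL₂(ℤ)`-action on `QD D`. -/
def IsNarrowClass (D : ℤ) (𝒜 : Set (ℤ × ℤ × ℤ)) : Prop :=
  ∃ q₀ ∈ QD D, 𝒜 = {q | ∃ γ : Matrix.SpecialLinearGroup (Fin 2) ℤ, QAct q₀ γ = q}

/-- `F_{1-k,D,𝒜}`. -/
def FA (k : ℕ) (D : ℤ) (𝒜 : Set (ℤ × ℤ × ℤ)) (τ : ℂ) : ℂ :=
  ((-1 : ℂ) ^ k * Dpow D (1 / 2 - (k : ℝ)) /
      (((Nat.choose (2 * k - 2) (k - 1) : ℝ) * Real.pi : ℝ) : ℂ)) *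
    ∑' q : 𝒜, Fsummand k D τ (q : ℤ × ℤ × ℤ)

/-- `f_{k,D,𝒜}`. -/
def fA (k : ℕ) (D : ℤ) (𝒜 : Set (ℤ × ℤ × ℤ)) (τ : ℂ) : ℂ :=
  ((-1 : ℂ) ^ k * Dpow D ((k : ℝ) - 1 / 2) /
      (((Nat.choose (2 * k - 2) (k - 1) : ℝ) * Real.pi : ℝ) : ℂ)) *
    ∑' q : 𝒜, Qval (q : ℤ × ℤ × ℤ) τ ^ (-(k : ℤ))

/-- Partial derivative in the real direction `x`. -/
def dxx (G : ℂ → ℂ) (τ : ℂ) : ℂ :=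
  deriv (fun x : ℝ => G ((x : ℂ) + (τ.im : ℂ) * Complex.I)) τ.re

/-- Partial derivative in the imaginary direction `y`. -/
def dyy (G : ℂ → ℂ) (τ : ℂ) : ℂ :=
  deriv (fun y : ℝ => G ((τ.re : ℂ) + (y : ℂ) * Complex.I)) τ.im

/-- Wirtinger derivative `∂/∂τ̄ = (1/2)(∂/∂x + i ∂/∂y)`. -/
def wirDbar (G : ℂ → ℂ) (τ : ℂ) : ℂ := (dxx G τ + Complex.I * dyy G τ) / 2

/-- Wirtinger derivative `∂/∂τ = (1/2)(∂/∂x - i ∂/∂y)`. -/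
def wirD (G : ℂ → ℂ) (τ : ℂ) : ℂ := (dxx G τ - Complex.I * dyy G τ) / 2

/-- The operator `ξ_{2-2k}(G)(τ) = 2 i y^{2-2k} conj(∂G/∂τ̄)`. -/
def xiOp (k : ℕ) (G : ℂ → ℂ) (τ : ℂ) : ℂ :=
  2 * Complex.I * (τ.im : ℂ) ^ ((2 : ℤ) - 2 * (k : ℤ)) * (starRingEnd ℂ) (wirDbar G τ)

/-- The operator `𝒟 = (1/(2πi)) ∂/∂τ`. -/
def Dop (G : ℂ → ℂ) : ℂ → ℂ := fun τ => (1 / (2 * (Real.pi : ℂ) * Complex.I)) * wirD G τ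

/-- The weight `2-2k` hyperbolic Laplacian. -/
def DeltaOp (k : ℕ) (G : ℂ → ℂ) (τ : ℂ) : ℂ :=
  -(τ.im : ℂ) ^ 2 * (dxx (fun z => dxx G z) τ + dyy (fun z => dyy G z) τ)
    + Complex.I * ((2 : ℂ) - 2 * (k : ℂ)) * (τ.im : ℂ) * (dxx G τ + Complex.I * dyy G τ)

/-- `φ(v) = ∫₀ᵛ sin(u)^{2k-2} du`. -/
def phi (k : ℕ) (v : ℝ) : ℝ := ∫ u in (0:ℝ)..v, Real.sin u ^ (2 * k - 2)

/-- `φ̂(τ) = τ^{k-1} sgn(x) φ(arctan|y/x|)`, with value `0` when `x = 0`. -/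
def phiHat (k : ℕ) (τ : ℂ) : ℂ :=
  τ ^ (k - 1) * ((Real.sign τ.re : ℝ) : ℂ) *
    ((phi k (Real.arctan |τ.im / τ.re|) : ℝ) : ℂ)

/-- The non-holomorphic Eichler integral
`f^*(τ) = (2i)^{1-2k} ∫_{-τ̄}^{i∞} conj(f(-z̄)) (z+τ)^{2k-2} dz`,
parametrized along the vertical path `z = -τ̄ + it`, `t ∈ (0,∞)`. -/
def fstar (k : ℕ) (f : ℂ → ℂ) (τ : ℂ) : ℂ :=
  (2 * Complex.I) ^ ((1 : ℤ) - 2 * (k : ℤ)) * Complex.I *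
    ∫ t in Set.Ioi (0 : ℝ), (starRingEnd ℂ) (f (τ + (t : ℂ) * Complex.I)) *
      (((2 * τ.im + t : ℝ) : ℂ) * Complex.I) ^ (2 * k - 2)

/-- `a : ℕ → ℂ` is the sequence of Fourier coefficients of `f` (with `a n` the
coefficient of `e^{2πi(n+1)τ}`). -/
def HasFourier (a : ℕ → ℂ) (f : ℂ → ℂ) : Prop :=
  ∀ τ : ℂ, 0 < τ.im →
    f τ = ∑' n : ℕ, a n * Complex.exp (2 * (Real.pi : ℂ) * Complex.I * ((n : ℂ) + 1) * τ)

/-- The holomorphic Eichler integral `ℰ_f(τ) = ∑_{n≥1} (a_n/n^{2k-1}) e^{2πinτ}`. -/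
def EichlerE (k : ℕ) (a : ℕ → ℂ) (τ : ℂ) : ℂ :=
  ∑' n : ℕ, a n / ((n : ℂ) + 1) ^ (2 * k - 1) *
    Complex.exp (2 * (Real.pi : ℂ) * Complex.I * ((n : ℂ) + 1) * τ)

/-- `r_{a,b}(𝒜) = 1_{[Q_{a,b} ∈ 𝒜]} + (-1)^k 1_{[-Q_{a,b} ∈ 𝒜]}`. -/
def rab (k : ℕ) (D : ℤ) (𝒜 : Set (ℤ × ℤ × ℤ)) (a b : ℤ) : ℝ :=
  Set.indicator 𝒜 1 (a, b, (b ^ 2 - D) / (4 * a)) +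
    (-1 : ℝ) ^ k * Set.indicator 𝒜 1 (-a, -b, -((b ^ 2 - D) / (4 * a)))

/-- The constant `c_∞(𝒜)`. -/
def cInftyA (k : ℕ) (D : ℤ) (𝒜 : Set (ℤ × ℤ × ℤ)) : ℝ :=
  -(1 / (2 ^ (2 * k - 2) * (2 * (k : ℝ) - 1) * (Nat.choose (2 * k - 2) (k - 1) : ℝ))) *
    ∑' n : ℕ, (1 / ((n : ℝ) + 1) ^ k) *
      ∑ b ∈ Finset.range (2 * (n + 1)),
        if (4 * ((n : ℤ) + 1)) ∣ ((b : ℤ) ^ 2 - D) then rab k D 𝒜 ((n : ℤ) + 1) (b : ℤ) else 0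

/-- The constant `c_∞`. -/
def cInfty (k : ℕ) (D : ℤ) : ℝ :=
  -(1 / (2 ^ (2 * k - 3) * (2 * (k : ℝ) - 1) * (Nat.choose (2 * k - 2) (k - 1) : ℝ))) *
    ∑' n : ℕ, (1 / ((n : ℝ) + 1) ^ k) *
      (((Finset.range (2 * (n + 1))).filter
        (fun b : ℕ => (4 * ((n : ℤ) + 1)) ∣ ((b : ℤ) ^ 2 - D))).card : ℝ)

/-- The weight `2-2k` Hecke operator `T_p`. -/
def heckeT (k : ℕ) (p : ℕ) (g : ℂ → ℂ) (τ : ℂ) : ℂ :=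
  (p : ℂ) ^ ((1 : ℤ) - 2 * (k : ℤ)) * g ((p : ℂ) * τ) +
    (p : ℂ)⁻¹ * ∑ r ∈ Finset.range p, g ((τ + (r : ℂ)) / (p : ℂ))

open scoped Classical in
/-- The symbol `(D|p)`. -/
def legSym (D : ℤ) (p : ℕ) : ℤ :=
  if (p : ℤ) ∣ D then 0
  else if p = 2 then (if D % 8 = 1 ∨ D % 8 = 7 then 1 else -1)
  else if ∃ m : ℤ, (p : ℤ) ∣ (m ^ 2 - D) then 1 else -1

/-- Primitive forms of discriminant `D`. -/
def QDprim (D : ℤ) : Set (ℤ × ℤ × ℤ) :=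
  {q | q.2.1 ^ 2 - 4 * q.1 * q.2.2 = D ∧ Int.gcd q.1 (Int.gcd q.2.1 q.2.2) = 1}

/-- `F'_{1-k,D}`: the sum over primitive forms, with normalization `D^{(1-k)/2}`. -/
def Fprim (k : ℕ) (D : ℤ) (τ : ℂ) : ℂ :=
  (Dpow D ((1 - (k : ℝ)) / 2) / (((Nat.choose (2 * k - 2) (k - 1) : ℝ) * Real.pi : ℝ) : ℂ)) *
    ∑' q : QDprim D, Fsummand k D τ (q : ℤ × ℤ × ℤ)

/-- The root `η_Q = (-b+√D)/(2a)`. -/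
def etaQ (D : ℤ) (q : ℤ × ℤ × ℤ) : ℝ := (-(q.2.1 : ℝ) + Real.sqrt (D : ℝ)) / (2 * (q.1 : ℝ))

/-- The root `η'_Q = (-b-√D)/(2a)`. -/
def etaQ' (D : ℤ) (q : ℤ × ℤ × ℤ) : ℝ := (-(q.2.1 : ℝ) - Real.sqrt (D : ℝ)) / (2 * (q.1 : ℝ))

/-- The scaling matrix `A_Q`. -/
def AQ (D : ℤ) (q : ℤ × ℤ × ℤ) : Matrix (Fin 2) (Fin 2) ℝ :=
  (1 / Real.sqrt |etaQ D q - etaQ' D q|) •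
    !![1, -(etaQ' D q);
       -(Real.sign (etaQ D q - etaQ' D q)), Real.sign (etaQ D q - etaQ' D q) * etaQ D q]

/-- Real matrix associated to an element of `SL₂(ℤ)`. -/
def toR (γ : Matrix.SpecialLinearGroup (Fin 2) ℤ) : Matrix (Fin 2) (Fin 2) ℝ :=
  γ.1.map (fun n => (n : ℝ))

/-- Möbius action of a real `2×2` matrix on `ℂ`. -/
def moeb (g : Matrix (Fin 2) (Fin 2) ℝ) (τ : ℂ) : ℂ :=
  ((g 0 0 : ℝ) * τ + (g 0 1 : ℝ)) / ((g 1 0 : ℝ) * τ + (g 1 1 : ℝ))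

/-- Automorphy factor `j(g,τ) = cτ + d`. -/
def jfac (g : Matrix (Fin 2) (Fin 2) ℝ) (τ : ℂ) : ℂ :=
  ((g 1 0 : ℝ) : ℂ) * τ + ((g 1 1 : ℝ) : ℂ)

/-- `n`-th period `r_n(f) = ∫₀^∞ f(it) tⁿ dt`. -/
def periodR (f : ℂ → ℂ) (n : ℕ) : ℂ :=
  ∫ t in Set.Ioi (0 : ℝ), f ((t : ℂ) * Complex.I) * (t : ℂ) ^ n

/-- The even period polynomial `r⁺(f;X)`. -/
def rPlus (k : ℕ) (f : ℂ → ℂ) : Polynomial ℂ :=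
  ∑ m ∈ Finset.range k,
    Polynomial.C ((-1 : ℂ) ^ m * (Nat.choose (2 * k - 2) (2 * m) : ℂ) * periodR f (2 * m)) *
      Polynomial.X ^ (2 * k - 2 - 2 * m)

end

theorem det_eq18 (γ : Matrix.SpecialLinearGroup (Fin 2) ℤ) :
    γ.1 0 0 * γ.1 1 1 - γ.1 0 1 * γ.1 1 0 = 1 := by
  have h := γ.2
  rwa [Matrix.det_fin_two] at h

theorem QAct_mem18 {D : ℤ} {q : ℤ × ℤ × ℤ} (hq : q ∈ QD D)
    (γ : Matrix.SpecialLinearGroup (Fin 2) ℤ) : QAct q γ ∈ QD D := by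
  have h := det_eq18 γ
  simp only [QD, Set.mem_ofPred_eq, QAct] at hq ⊢
  generalize γ.1 0 0 = p at *
  generalize γ.1 0 1 = r at *
  generalize γ.1 1 0 = s at *
  generalize γ.1 1 1 = t at *
  linear_combination hq + (q.2.1 ^ 2 - 4 * q.1 * q.2.2) * (p * t - r * s + 1) * h

theorem QAct_QAct18 (q : ℤ × ℤ × ℤ) (γ δ : Matrix.SpecialLinearGroup (Fin 2) ℤ) :
    QAct (QAct q γ) δ = QAct q (γ * δ) := by
  simp only [QAct, Matrix.SpecialLinearGroup.coe_mul, Matrix.mul_apply, Fin.sum_univ_two]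
  ext <;> simp only <;> ring

theorem QAct_one18 (q : ℤ × ℤ × ℤ) : QAct q 1 = q := by
  ext <;> simp [QAct]

/-- The bijection of `QD D` induced by `γ`. -/
def QEquiv18 (D : ℤ) (γ : Matrix.SpecialLinearGroup (Fin 2) ℤ) : QD D ≃ QD D where
  toFun q := ⟨QAct q.1 γ, QAct_mem18 q.2 γ⟩
  invFun q := ⟨QAct q.1 γ⁻¹, QAct_mem18 q.2 γ⁻¹⟩
  left_inv q := by
    apply Subtype.ext
    simp only [QAct_QAct18, mul_inv_cancel, QAct_one18]
  right_inv q := by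
    apply Subtype.ext
    simp only [QAct_QAct18, inv_mul_cancel, QAct_one18]

theorem summand18 (k : ℕ) (hk : 2 ≤ k) (D : ℤ)
    (γ : Matrix.SpecialLinearGroup (Fin 2) ℤ) (τ : ℂ) (hτ : 0 < τ.im) (q : ℤ × ℤ × ℤ) :
    Fsummand k D ((((γ.1 0 0 : ℤ) : ℂ) * τ + ((γ.1 0 1 : ℤ) : ℂ)) /
        (((γ.1 1 0 : ℤ) : ℂ) * τ + ((γ.1 1 1 : ℤ) : ℂ))) q =
      (((γ.1 1 0 : ℤ) : ℂ) * τ + ((γ.1 1 1 : ℤ) : ℂ)) ^ ((2 : ℤ) - 2 * (k : ℤ)) *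
        Fsummand k D τ (QAct q γ) := by
  have hdet := det_eq18 γ
  have hdR : (γ.1 0 0 : ℝ) * γ.1 1 1 - γ.1 0 1 * γ.1 1 0 = 1 := by exact_mod_cast hdet
  set j : ℂ := ((γ.1 1 0 : ℤ) : ℂ) * τ + ((γ.1 1 1 : ℤ) : ℂ) with hj
  set N : ℂ := ((γ.1 0 0 : ℤ) : ℂ) * τ + ((γ.1 0 1 : ℤ) : ℂ) with hN
  have hj0 : j ≠ 0 := by
    intro h0
    have him := congrArg Complex.im h0
    have hre := congrArg Complex.re h0
    simp [hj] at him hre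
    rcases him with h | h
    · rw [h] at hre hdet
      simp at hre
      rw [hre] at hdet
      simp at hdet
    · exact hτ.ne' h
  have hn : 0 < Complex.normSq j := Complex.normSq_pos.mpr hj0
  have hval : Qval q (N / j) = Qval (QAct q γ) τ / j ^ 2 := by
    have : Qval (QAct q γ) τ = q.1 * N ^ 2 + q.2.1 * N * j + q.2.2 * j ^ 2 := by
      simp only [Qval, QAct, hN, hj]
      push_cast
      ring
    rw [this]
    simp only [Qval]
    field_simp
  have hjre : j.re = γ.1 1 0 * τ.re + γ.1 1 1 := by simp [hj]
  have hjim : j.im = γ.1 1 0 * τ.im := by simp [hj]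
  have hNre : N.re = γ.1 0 0 * τ.re + γ.1 0 1 := by simp [hN]
  have hNim : N.im = γ.1 0 0 * τ.im := by simp [hN]
  have him : (N / j).im = τ.im / Complex.normSq j := by
    rw [Complex.div_im, ← sub_div]
    congr 1
    rw [hjre, hjim, hNre, hNim]
    linear_combination τ.im * hdR
  have hell : Qell q (N / j) = Qell (QAct q γ) τ / Complex.normSq j := by
    have h1 : Qell (QAct q γ) τ = q.1 * Complex.normSq N
        + q.2.1 * (N.re * j.re + N.im * j.im) + q.2.2 * Complex.normSq j := by
      simp only [Qell, QAct, Complex.normSq_apply, hjre, hjim, hNre, hNim]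
      push_cast
      ring
    rw [h1]
    simp only [Qell]
    rw [Complex.div_re, map_div₀]
    field_simp
  have hsign : Real.sign (Qell q (N / j)) = Real.sign (Qell (QAct q γ) τ) := by
    rw [hell]
    rcases lt_trichotomy (Qell (QAct q γ) τ) 0 with h | h | h
    · rw [Real.sign_of_neg h, Real.sign_of_neg (div_neg_of_neg_of_pos h hn)]
    · rw [h, zero_div]
    · rw [Real.sign_of_pos h, Real.sign_of_pos (div_pos h hn)]
  have harg : (D : ℝ) * (N / j).im ^ 2 / Complex.normSq (Qval q (N / j)) =
      (D : ℝ) * τ.im ^ 2 / Complex.normSq (Qval (QAct q γ) τ) := by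
    rw [him, hval, map_div₀, map_pow]
    field_simp
  have hpow : j ^ ((2 : ℤ) - 2 * (k : ℤ)) = ((j ^ 2) ^ (k - 1))⁻¹ := by
    obtain ⟨m, rfl⟩ : ∃ m, k = m + 1 := ⟨k - 1, by omega⟩
    rw [show (2 : ℤ) - 2 * ((m + 1 : ℕ) : ℤ) = -((2 * m : ℕ) : ℤ) by push_cast; ring,
      zpow_neg, zpow_natCast, pow_mul, Nat.add_sub_cancel]
  unfold Fsummand
  rw [hsign, harg, hval, hpow, div_pow]
  ring

theorem stmt18 (k : ℕ) (hk : 2 ≤ k) (D : ℤ) (hD : 0 < D)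
    (hD4 : D % 4 = 0 ∨ D % 4 = 1) (hDsq : ¬∃ m : ℤ, m ^ 2 = D)
    (γ : Matrix.SpecialLinearGroup (Fin 2) ℤ) (τ : ℂ) (hτ : 0 < τ.im) :
    F k D ((((γ.1 0 0 : ℤ) : ℂ) * τ + ((γ.1 0 1 : ℤ) : ℂ)) /
        (((γ.1 1 0 : ℤ) : ℂ) * τ + ((γ.1 1 1 : ℤ) : ℂ))) =
      (((γ.1 1 0 : ℤ) : ℂ) * τ + ((γ.1 1 1 : ℤ) : ℂ)) ^ ((2 : ℤ) - 2 * (k : ℤ)) * F k D τ := by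
  have h := (QEquiv18 D γ).tsum_eq (fun q : QD D => Fsummand k D τ (q : ℤ × ℤ × ℤ))
  have h2 : ∀ q : QD D, (((QEquiv18 D γ) q : QD D) : ℤ × ℤ × ℤ) = QAct q.1 γ := fun q => rfl
  simp only [h2] at h
  have h3 := tsum_congr (L := SummationFilter.unconditional _) (fun q : QD D => summand18 k hk D γ τ hτ q.1)
  rw [tsum_mul_left, h] at h3
  unfold F
  rw [h3, mul_left_comm]
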